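/- Let p be an odd prime and let r be an element of ZMod p with r ≠ 0 and r ≠ 1. Define f : ZMod p → ZMod p → ZMod p by f(i,j) = j + (i - j) * r⁻¹. Then f is not associative: there exist i, j, k ∈ ZMod p with f(f(i,j), k) ≠ f(i, f(j,k)). Consequently the loop L_{p,r} built from H_{p,r} is not a group. -/

import Mathlib

/-- The entry `H_{p,r}[i,j] = j + (i - j) * r⁻¹` of the array `H_{p,r}`. -/
def Hpr {p : ℕ} (r : ZMod p) (i j : ZMod p) : ZMod p := j + (i - j) * r⁻¹

section AffineOp

variable {R : Type*} [Ring R]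

/-- The affine combination of `i` and `j` with weights `s` and `1 - s`, regarded as a binary
operation on a ring; `Hpr r` is the case `s = r⁻¹` over `ZMod p`. The weights multiply on the right,
as in `Hpr`, since the ring need not be commutative. -/
def affineOp (s i j : R) : R := j + (i - j) * s

theorem affineOp_associator (s i j k : R) :
    affineOp s (affineOp s i j) k - affineOp s i (affineOp s j k) = (i - k) * (s * s - s) := by
  simp only [affineOp]
  noncomm_ring

theorem affineOp_assoc_iff_isIdempotentElem {s : R} :
    (∀ i j k : R, affineOp s (affineOp s i j) k = affineOp s i (affineOp s j k)) ↔
      IsIdempotentElem s := by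
  simp only [← sub_eq_zero (a := affineOp s _ _), affineOp_associator]
  constructor
  · intro h
    simpa [IsIdempotentElem, sub_eq_zero] using h 1 0 0
  · intro hs i _ k
    rw [hs.eq, sub_self, mul_zero]

theorem Hpr_not_associative_general (r : Rˣ) (hr : r ≠ 1) :
    ∃ i j k : R, affineOp (↑r⁻¹ : R) (affineOp ↑r⁻¹ i j) k ≠
      affineOp ↑r⁻¹ i (affineOp ↑r⁻¹ j k) := by
  by_contra! h
  have hidem : IsIdempotentElem (↑r⁻¹ : R) := affineOp_assoc_iff_isIdempotentElem.mp h
  have hinv : (↑r⁻¹ : R) = 1 := (IsIdempotentElem.iff_eq_one_of_isUnit r⁻¹.isUnit).mp hidem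
  exact hr (inv_eq_one.mp (Units.val_eq_one.mp hinv))

end AffineOp

/-- For an odd prime `p` and `r ∈ ZMod p` with `r ≠ 0`, `r ≠ 1`, the operation
`f(i,j) = j + (i - j) * r⁻¹` is not associative; hence `L_{p,r}` is not a group. -/
theorem Hpr_not_associative (p : ℕ) (hp : p.Prime) (hodd : p ≠ 2) (r : ZMod p)
    (hr0 : r ≠ 0) (hr1 : r ≠ 1) :
    ∃ i j k : ZMod p, Hpr r (Hpr r i j) k ≠ Hpr r i (Hpr r j k) := by
  have : Fact p.Prime := ⟨hp⟩
  exact Hpr_not_associative_general (Units.mk0 r hr0) (mt (congrArg Units.val) hr1)
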